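/- arXiv:1311.0297 — 12 statements merged into one kernel-verified Lean document; each statement's English description precedes it below -/
import Mathlib

section
/- Let X be a set and let L be a nonempty subset of [0,∞]^{X×X} that is a sublattice, i.e., closed under binary pointwise suprema and binary pointwise infima. Then the following are equivalent: (i) L is compact in the product topology; (ii) L is closed in the product topology; (iii) L is a complete sublattice, i.e., for every nonempty subset S of L both the pointwise supremum and the pointwise infimum of S belong to L. -/
open scoped ENNReal

open Filter Topology

/-- A closed set stable under binary suprema is stable under suprema of nonempty subsets. -/
theorem SupClosed.sSup_mem_of_isClosed {α : Type*} [CompleteLattice α] [TopologicalSpace α]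
    [SupConvergenceClass α] {L S : Set α} (hL : SupClosed L) (hc : IsClosed L)
    (hS : S ⊆ L) (hne : S.Nonempty) : sSup S ∈ L := by
  have hlub : IsLUB (supClosure S) (sSup S) := isLUB_supClosure.2 (isLUB_sSup S)
  have : Nonempty (supClosure S) := (hne.mono subset_supClosure).to_subtype
  have : IsDirectedOrder (supClosure S) :=
    directedOn_iff_isDirectedOrder.1 supClosed_supClosure.directedOn
  exact hc.mem_of_tendsto (SupConvergenceClass.tendsto_coe_atTop_isLUB _ _ hlub)
    (Eventually.of_forall fun x => supClosure_min hS hL x.2)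

/-- A closed set stable under binary infima is stable under infima of nonempty subsets. -/
theorem InfClosed.sInf_mem_of_isClosed {α : Type*} [CompleteLattice α] [TopologicalSpace α]
    [InfConvergenceClass α] {L S : Set α} (hL : InfClosed L) (hc : IsClosed L)
    (hS : S ⊆ L) (hne : S.Nonempty) : sInf S ∈ L := by
  have hglb : IsGLB (infClosure S) (sInf S) := isGLB_infClosure.2 (isGLB_sInf S)
  have : Nonempty (infClosure S) := (hne.mono subset_infClosure).to_subtype
  have : IsCodirectedOrder (infClosure S) :=
    directedOn_iff_isCodirectedOrder.1 infClosed_infClosure.codirectedOn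
  exact hc.mem_of_tendsto (InfConvergenceClass.tendsto_coe_atBot_isGLB _ _ hglb)
    (Eventually.of_forall fun x => infClosure_min hS hL x.2)

/-- A set of functions stable under suprema and infima of nonempty subsets is closed in the
product topology: a limit of a filter is its lower limit. -/
theorem isClosed_of_sSup_mem_of_sInf_mem {ι α : Type*} [CompleteLinearOrder α] [DenselyOrdered α]
    [TopologicalSpace α] [OrderTopology α] {L : Set (ι → α)}
    (hsup : ∀ S ⊆ L, S.Nonempty → sSup S ∈ L) (hinf : ∀ S ⊆ L, S.Nonempty → sInf S ∈ L) :
    IsClosed L := by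
  refine isClosed_of_closure_subset fun f hf => ?_
  have : (𝓝[L] f).NeBot := mem_closure_iff_nhdsWithin_neBot.1 hf
  let S : Set (ι → α) := sInf '' {A | A ∈ 𝓝[L] f ∧ A ⊆ L}
  have hSL : S ⊆ L := by
    rintro _ ⟨A, ⟨hA, hAL⟩, rfl⟩
    exact hinf A hAL (nonempty_of_mem hA)
  have hS : S.Nonempty := ⟨_, L, ⟨self_mem_nhdsWithin, subset_rfl⟩, rfl⟩
  suffices h : sSup S = f from h ▸ hsup S hSL hS
  apply le_antisymm
  · refine sSup_le ?_
    rintro _ ⟨A, ⟨hA, -⟩, rfl⟩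
    exact ge_of_tendsto (tendsto_id.mono_left nhdsWithin_le_nhds)
      (mem_of_superset hA fun g hg => sInf_le hg)
  · intro p
    refine le_of_forall_lt_imp_le_of_dense fun c hcp => ?_
    let A : Set (ι → α) := L ∩ {g | c < g p}
    have hA : A ∈ 𝓝[L] f :=
      inter_mem self_mem_nhdsWithin
        (mem_nhdsWithin_of_mem_nhds ((continuous_apply p).continuousAt.eventually_const_lt hcp))
    have hcA : c ≤ sInf A p := by
      rw [sInf_apply]
      exact le_iInf fun g => g.2.2.le
    have hAS : sInf A ∈ S := ⟨A, ⟨hA, Set.inter_subset_left⟩, rfl⟩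
    exact hcA.trans (le_sSup hAS p)

/-- For a nonempty sublattice `L` of `[0,∞]^{X×X}` (closed under binary
pointwise sups and infs), the following are equivalent: `L` is compact in the product
topology; `L` is closed; `L` is a complete sublattice (closed under pointwise sups and
infs of arbitrary nonempty subsets). -/
theorem stmt1 (X : Type*) (L : Set (X × X → ℝ≥0∞)) (hne : L.Nonempty)
    (hsup : ∀ d ∈ L, ∀ m ∈ L, d ⊔ m ∈ L) (hinf : ∀ d ∈ L, ∀ m ∈ L, d ⊓ m ∈ L) :
    (IsCompact L ↔ IsClosed L) ∧
    (IsClosed L ↔ ∀ S ⊆ L, S.Nonempty → sSup S ∈ L ∧ sInf S ∈ L) := by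
  refine ⟨⟨IsCompact.isClosed, IsClosed.isCompact⟩, fun hc S hS hSne => ⟨?_, ?_⟩, fun h => ?_⟩
  · exact SupClosed.sSup_mem_of_isClosed (fun d hd m hm => hsup d hd m hm) hc hS hSne
  · exact InfClosed.sInf_mem_of_isClosed (fun d hd m hm => hinf d hd m hm) hc hS hSne
  · exact isClosed_of_sSup_mem_of_sInf_mem (fun S hS hSne => (h S hS hSne).1)
      fun S hS hSne => (h S hS hSne).2
end

section
/- Let X be a set containing two distinct elements. Then there exist weight structures d, m : X × X → [0,∞], each satisfying axioms (0), (s) and (Δ), whose pointwise infimum d ⊓ m also satisfies (0), (s) and (Δ), such that: (i) for the max-symmetrization Σ_!(p)(x,y) = max(p(x,y), p(y,x)), one has Σ_!(d ⊓ m) ≠ Σ_!(d) ⊓ Σ_!(m) (pointwise infimum on the right); and (ii) for the min-symmetrization Σ_*(p)(x,y) = min(p(x,y), p(y,x)), one has Σ_*(d ⊔ m) ≠ Σ_*(d) ⊔ Σ_*(m) (pointwise supremum on the right). Consequently Σ_! does not preserve binary meets and Σ_* does not preserve binary joins on W_{0,s,Δ}. -/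
open scoped ENNReal

/-- Axiom (0). -/
def Ax0 {X : Type*} (d : X × X → ℝ≥0∞) : Prop := ∀ x : X, d (x, x) = 0

/-- Axiom (s). -/
def AxSep {X : Type*} (d : X × X → ℝ≥0∞) : Prop :=
  ∀ x y : X, d (x, y) = 0 → d (y, x) = 0 → x = y

/-- Axiom (Δ). -/
def AxTri {X : Type*} (d : X × X → ℝ≥0∞) : Prop :=
  ∀ x y z : X, d (x, z) ≤ d (x, y) + d (y, z)

/-- The max-symmetrization `Σ_!`. -/
def symMax {X : Type*} (q : X × X → ℝ≥0∞) : X × X → ℝ≥0∞ :=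
  fun p => q p ⊔ q (p.2, p.1)

/-- The min-symmetrization `Σ_*`. -/
def symMin {X : Type*} (q : X × X → ℝ≥0∞) : X × X → ℝ≥0∞ :=
  fun p => q p ⊓ q (p.2, p.1)

/-- A weight structure vanishing on the diagonal with values in `[1, 2]` off it satisfies
(0), (s) and (Δ). -/
theorem ax0_axSep_axTri_of_mem_Icc {X : Type*} {q : X × X → ℝ≥0∞} (h0 : ∀ x, q (x, x) = 0)
    (h : ∀ x y, x ≠ y → q (x, y) ∈ Set.Icc 1 2) : Ax0 q ∧ AxSep q ∧ AxTri q := by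
  refine ⟨h0, fun x y hxy _ => ?_, fun x y z => ?_⟩
  · by_contra hne
    simpa [hxy] using (h x y hne).1
  · by_cases hxy : x = y
    · simp [hxy, h0]
    by_cases hyz : y = z
    · simp [hyz, h0]
    by_cases hxz : x = z
    · simp [hxz, h0]
    calc q (x, z) ≤ 2 := (h x z hxz).2
      _ = 1 + 1 := one_add_one_eq_two.symm
      _ ≤ q (x, y) + q (y, z) := add_le_add (h x y hxy).1 (h y z hyz).1

open Classical in
/-- The weight structure with value `1` at `(a, b)` and `2` at all other off-diagonal pairs. -/
noncomputable def oneAt {X : Type*} (a b : X) : X × X → ℝ≥0∞ :=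
  fun p => if p.1 = p.2 then 0 else if p = (a, b) then 1 else 2

theorem oneAt_diag {X : Type*} (a b x : X) : oneAt a b (x, x) = 0 := by simp [oneAt]

theorem oneAt_mem_Icc {X : Type*} (a b : X) {x y : X} (hxy : x ≠ y) :
    oneAt a b (x, y) ∈ Set.Icc 1 2 := by
  unfold oneAt
  rw [if_neg hxy]
  split_ifs <;> simp

theorem oneAt_self {X : Type*} {a b : X} (hab : a ≠ b) : oneAt a b (a, b) = 1 := by
  simp [oneAt, hab]

theorem oneAt_swap {X : Type*} {a b : X} (hab : a ≠ b) : oneAt a b (b, a) = 2 := by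
  simp [oneAt, hab, hab.symm]

/-- On a set with two distinct elements there are weight structures `d, m`
satisfying (0), (s), (Δ), whose pointwise infimum also satisfies (0), (s), (Δ), with
`Σ_!(d ⊓ m) ≠ Σ_!(d) ⊓ Σ_!(m)` and `Σ_*(d ⊔ m) ≠ Σ_*(d) ⊔ Σ_*(m)`. -/
theorem stmt5 (X : Type*) (a b : X) (hab : a ≠ b) :
    ∃ d m : X × X → ℝ≥0∞,
      (Ax0 d ∧ AxSep d ∧ AxTri d) ∧ (Ax0 m ∧ AxSep m ∧ AxTri m) ∧
      (Ax0 (d ⊓ m) ∧ AxSep (d ⊓ m) ∧ AxTri (d ⊓ m)) ∧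
      symMax (d ⊓ m) ≠ symMax d ⊓ symMax m ∧
      symMin (d ⊔ m) ≠ symMin d ⊔ symMin m := by
  have key (c e : X) := ax0_axSep_axTri_of_mem_Icc (oneAt_diag c e) fun _ _ => oneAt_mem_Icc c e
  have h12 : (1 : ℝ≥0∞) ≤ 2 := one_le_two
  refine ⟨oneAt a b, oneAt b a, key a b, key b a,
    ax0_axSep_axTri_of_mem_Icc (fun x => by simp [oneAt_diag]) fun x y hxy =>
      ⟨le_inf (oneAt_mem_Icc a b hxy).1 (oneAt_mem_Icc b a hxy).1,
        inf_le_left.trans (oneAt_mem_Icc a b hxy).2⟩, fun h => ?_, fun h => ?_⟩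
  · have := congrFun h (a, b)
    simp [symMax, oneAt_self hab, oneAt_self hab.symm, oneAt_swap hab, oneAt_swap hab.symm,
      h12] at this
  · have := congrFun h (a, b)
    simp [symMin, oneAt_self hab, oneAt_self hab.symm, oneAt_swap hab, oneAt_swap hab.symm,
      h12] at this
end

section
/- Let X be a set containing three distinct elements. For a weight structure p with p(x,x) = 0 for all x, let Δ_*(p) denote the greatest weight structure below p satisfying axioms (0) and (Δ) (equivalently, Δ_*(p)(x,y) is the infimum over all finite paths x = y_0, …, y_n = y of Σ_{i<n} p(y_i,y_{i+1})). Then there exist weight structures d, m : X × X → [0,∞], each satisfying axioms (0), (s) and (Σ), such that Δ_*(d ⊔ m) ≠ Δ_*(d) ⊔ Δ_*(m), where ⊔ denotes pointwise supremum. Consequently Δ_* does not preserve binary joins. -/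
open scoped ENNReal

/-- Axiom (Σ). -/
def AxSym {X : Type*} (d : X × X → ℝ≥0∞) : Prop := ∀ x y : X, d (x, y) = d (y, x)

/-- `Δ_*`: the greatest weight structure below `p` satisfying (0) and (Δ), given by the
infimum over all finite paths `x = γ 0, …, γ n = y` (`n ≥ 1`) of `Σ_{i<n} p(γ i, γ (i+1))`. -/
noncomputable def deltaStar {X : Type*} (p : X × X → ℝ≥0∞) : X × X → ℝ≥0∞ :=
  fun q =>
    ⨅ (n : ℕ) (_ : 1 ≤ n) (γ : Fin (n + 1) → X) (_ : γ 0 = q.1) (_ : γ (Fin.last n) = q.2),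
      ∑ i : Fin n, p (γ i.castSucc, γ i.succ)

lemma deltaStar_le_sum {X : Type*} (p : X × X → ℝ≥0∞) {n : ℕ} (hn : 1 ≤ n)
    (γ : Fin (n + 1) → X) :
    deltaStar p (γ 0, γ (Fin.last n)) ≤ ∑ i : Fin n, p (γ i.castSucc, γ i.succ) :=
  iInf₂_le_of_le n hn <| iInf_le_of_le γ <| iInf₂_le_of_le rfl rfl le_rfl

lemma deltaStar_le_self {X : Type*} (p : X × X → ℝ≥0∞) (a b : X) :
    deltaStar p (a, b) ≤ p (a, b) := by
  simpa using deltaStar_le_sum p le_rfl ![a, b]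

lemma deltaStar_le_add {X : Type*} (p : X × X → ℝ≥0∞) (a b c : X) :
    deltaStar p (a, c) ≤ p (a, b) + p (b, c) := by
  simpa [Fin.sum_univ_two] using deltaStar_le_sum p one_le_two ![a, b, c]

/-- If all distinct points are at infinite weight, the same holds after applying `Δ_*`. -/
lemma deltaStar_eq_top {X : Type*} {p : X × X → ℝ≥0∞} (hp : ∀ a b, a ≠ b → p (a, b) = ⊤)
    {a b : X} (hab : a ≠ b) : deltaStar p (a, b) = ⊤ := by
  simp only [deltaStar, iInf_eq_top]
  rintro n - γ h0 hlast
  by_contra hsum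
  have hstep (i : Fin n) : γ i.castSucc = γ i.succ := by
    by_contra hne
    exact hsum (ENNReal.sum_eq_top.2 ⟨i, Finset.mem_univ i, hp _ _ hne⟩)
  have hconst (i : Fin (n + 1)) : γ i = γ 0 := by
    induction i using Fin.induction with
    | zero => rfl
    | succ i ih => rw [← hstep i, ih]
  exact hab (by rw [← h0, ← hlast, hconst (Fin.last n)])

open Classical in
/-- The weight structure giving weight `1` to the pairs of distinct points in `E`, and `∞` to the
other pairs of distinct points. -/
noncomputable def edgeWeight {X : Type*} (E : Set (Sym2 X)) : X × X → ℝ≥0∞ :=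
  fun q => if q.1 = q.2 then 0 else if s(q.1, q.2) ∈ E then 1 else ⊤

section EdgeWeight

variable {X : Type*} (E : Set (Sym2 X))

lemma ax0_edgeWeight : Ax0 (edgeWeight E) := fun a => by simp [edgeWeight]

lemma axSep_edgeWeight : AxSep (edgeWeight E) := fun a b h _ => by
  by_contra hne
  by_cases hE : s(a, b) ∈ E <;> simp [edgeWeight, hne, hE] at h

lemma axSym_edgeWeight : AxSym (edgeWeight E) := fun a b => by
  obtain rfl | hab := eq_or_ne a b
  · rfl
  · simp only [edgeWeight, hab, hab.symm, if_false]
    rw [Sym2.eq_swap]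

variable {E}

lemma edgeWeight_of_mem {a b : X} (hab : a ≠ b) (h : s(a, b) ∈ E) : edgeWeight E (a, b) = 1 := by
  simp [edgeWeight, hab, h]

lemma edgeWeight_of_notMem {a b : X} (hab : a ≠ b) (h : s(a, b) ∉ E) :
    edgeWeight E (a, b) = ⊤ := by
  simp [edgeWeight, hab, h]

lemma edgeWeight_compl_sup_edgeWeight {a b : X} (hab : a ≠ b) :
    (edgeWeight Eᶜ ⊔ edgeWeight E) (a, b) = ⊤ := by
  by_cases h : s(a, b) ∈ E
  · simp [edgeWeight_of_notMem hab (E := Eᶜ) (by simpa using h)]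
  · simp [edgeWeight_of_notMem hab h]

end EdgeWeight

/-- On a set with three distinct elements there exist weight structures
`d, m` satisfying (0), (s), (Σ) with `Δ_*(d ⊔ m) ≠ Δ_*(d) ⊔ Δ_*(m)`; hence `Δ_*` does
not preserve binary joins. -/
theorem stmt6 (X : Type*) (x y z : X) (hxy : x ≠ y) (hxz : x ≠ z) (hyz : y ≠ z) :
    ∃ d m : X × X → ℝ≥0∞,
      (Ax0 d ∧ AxSep d ∧ AxSym d) ∧ (Ax0 m ∧ AxSep m ∧ AxSym m) ∧
      deltaStar (d ⊔ m) ≠ deltaStar d ⊔ deltaStar m := by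
  refine ⟨edgeWeight {s(x, z)}ᶜ, edgeWeight {s(x, z)},
    ⟨ax0_edgeWeight _, axSep_edgeWeight _, axSym_edgeWeight _⟩,
    ⟨ax0_edgeWeight _, axSep_edgeWeight _, axSym_edgeWeight _⟩, fun h => ?_⟩
  have htop := congrFun h (x, z)
  rw [deltaStar_eq_top (fun _ _ => edgeWeight_compl_sup_edgeWeight) hxz] at htop
  have hd := deltaStar_le_add (edgeWeight {s(x, z)}ᶜ) x y z
  rw [edgeWeight_of_mem hxy (by simp [hxz, hyz]),
    edgeWeight_of_mem hyz (by simp [hxy.symm, hyz])] at hd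
  have hm := deltaStar_le_self (edgeWeight {s(x, z)}) x z
  rw [edgeWeight_of_mem hxz (Set.mem_singleton _)] at hm
  have hlt : deltaStar (edgeWeight {s(x, z)}ᶜ) (x, z) ⊔
      deltaStar (edgeWeight {s(x, z)}) (x, z) < ⊤ :=
    max_lt (hd.trans_lt (by simp)) (hm.trans_lt (by simp))
  exact hlt.ne htop.symm
end

section
/- Let X be a set and let d, m : X × X → [0,∞] be weight structures each satisfying axioms (0) and (Δ). Then ψ(d ⊔ m) = ψ(d) ⊔ ψ(m), where d ⊔ m is the pointwise supremum (i.e., (d ⊔ m)(x,y) = max(d(x,y), m(x,y))) and ψ(d) ⊔ ψ(m) is the supremum of the two topologies in the lattice of topologies on X ordered by inclusion of open sets (the coarsest topology refining both). -/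
open scoped ENNReal

/-- `ψ(d)`: the topology generated by the balls `B_d(x,ε) = {y | d(x,y) < ε}` as a
subbasis. -/
def psi {X : Type*} (d : X × X → ℝ≥0∞) : TopologicalSpace X :=
  TopologicalSpace.generateFrom
    {s : Set X | ∃ (x : X) (ε : ℝ≥0∞), 0 < ε ∧ s = {y : X | d (x, y) < ε}}

/-- A weight structure satisfying (0) that dominates one satisfying (Δ) induces a finer
topology. -/
lemma psi_le_psi {X : Type*} {d e : X × X → ℝ≥0∞} (h0 : Ax0 e) (hT : AxTri d) (hde : d ≤ e) :
    psi e ≤ psi d := by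
  refine le_generateFrom ?_
  rintro _ ⟨x, ε, -, rfl⟩
  let _ : TopologicalSpace X := psi e
  refine isOpen_iff_forall_mem_open.2 fun y (hy : d (x, y) < ε) ↦
    ⟨{z | e (y, z) < ε - d (x, y)}, fun z hz ↦ ?_, ?_, ?_⟩
  · calc d (x, z) ≤ d (x, y) + d (y, z) := hT x y z
      _ ≤ d (x, y) + e (y, z) := by gcongr; exact hde _
      _ < ε := lt_tsub_iff_left.1 hz
  · exact .basic _ ⟨y, _, tsub_pos_of_lt hy, rfl⟩
  · exact (h0 y).trans_lt (tsub_pos_of_lt hy)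

/-- Every ball of `d ⊔ m` is the intersection of a ball of `d` and a ball of `m`. -/
lemma inf_psi_le_psi_sup {X : Type*} (d m : X × X → ℝ≥0∞) :
    psi d ⊓ psi m ≤ psi (d ⊔ m) := by
  refine le_generateFrom ?_
  rintro _ ⟨x, ε, hε, rfl⟩
  let _ : TopologicalSpace X := psi d ⊓ psi m
  have hd : IsOpen {y | d (x, y) < ε} :=
    (inf_le_left : psi d ⊓ psi m ≤ psi d) _ (.basic _ ⟨x, ε, hε, rfl⟩)
  have hm : IsOpen {y | m (x, y) < ε} :=
    (inf_le_right : psi d ⊓ psi m ≤ psi m) _ (.basic _ ⟨x, ε, hε, rfl⟩)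
  simpa only [Pi.sup_apply, sup_lt_iff, Set.ofPred_and] using hd.inter hm

/-- For weight structures `d, m` satisfying (0) and (Δ),
`ψ(d ⊔ m) = ψ(d) ⊔ ψ(m)`, the supremum being taken in the lattice of topologies ordered
by inclusion of open sets (the coarsest topology refining both).  NB: Mathlib orders
`TopologicalSpace X` with the discrete topology as `⊥`, i.e. *reverse* to inclusion of
open-set families, so this supremum is Mathlib's `⊓`. -/
theorem stmt7 (X : Type*) (d m : X × X → ℝ≥0∞)
    (h0d : Ax0 d) (hTd : AxTri d) (h0m : Ax0 m) (hTm : AxTri m) :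
    psi (d ⊔ m) = psi d ⊓ psi m := by
  have h0 : Ax0 (d ⊔ m) := fun x ↦ by simp [h0d x, h0m x]
  exact le_antisymm (le_inf (psi_le_psi h0 hTd le_sup_left) (psi_le_psi h0 hTm le_sup_right))
    (inf_psi_le_psi_sup d m)
end

section
/- There exist a set X and weight structures d, m : X × X → [0,∞], each satisfying axioms (0), (s), (Σ) and (Δ) (i.e., extended metrics), such that ψ(d) = ψ(m), yet for the weight structure p defined as the greatest weight structure satisfying axioms (0) and (Δ) that lies below both d and m (equivalently, p(x,y) is the infimum over all finite paths x = y_0, …, y_n = y of Σ_{i<n} min(d(y_i,y_{i+1}), m(y_i,y_{i+1}))), the topology ψ(p) is strictly coarser than ψ(d). Consequently, the fibers of ψ over a topology are in general not closed under binary meets, and ψ does not preserve binary meets. -/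
open scoped ENNReal

/-- The greatest weight structure below `p` satisfying (0) and (Δ): the infimum over
finite paths of the sums of `p`-lengths of their segments. -/
noncomputable def pathInf {X : Type*} (p : X × X → ℝ≥0∞) : X × X → ℝ≥0∞ :=
  fun q =>
    ⨅ (n : ℕ) (_ : 1 ≤ n) (γ : Fin (n + 1) → X) (_ : γ 0 = q.1) (_ : γ (Fin.last n) = q.2),
      ∑ i : Fin n, p (γ i.castSucc, γ i.succ)

open scoped Topology

/-- Appending one step to a path. -/
lemma pathInf_le_add {X : Type*} (q : X × X → ℝ≥0∞) (x y z : X) :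
    pathInf q (x, z) ≤ pathInf q (x, y) + q (y, z) := by
  rw [← tsub_le_iff_right]
  refine le_iInf₂ fun n _ => le_iInf fun γ => le_iInf₂ fun h0 hl => ?_
  rw [tsub_le_iff_right]
  refine (iInf₂_le (n + 1) (Nat.le_add_left 1 n)).trans
    ((iInf_le _ (Fin.snoc γ z : Fin (n + 2) → X)).trans ((iInf₂_le ?_ ?_).trans_eq ?_))
  · rw [← Fin.castSucc_zero, Fin.snoc_castSucc]
    exact h0
  · exact Fin.snoc_last (α := fun _ => X) z γ
  · rw [Fin.sum_univ_castSucc]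
    simp only [← Fin.castSucc_succ, Fin.snoc_castSucc, Fin.succ_last, Fin.snoc_last]
    rw [hl]

/-- The weight structure pulled back from a metric space along `F`. -/
noncomputable def pullbackWeight {X E : Type*} [MetricSpace E] (F : X → E) : X × X → ℝ≥0∞ :=
  fun q => edist (F q.1) (F q.2)

lemma pullbackWeight_axioms {X E : Type*} [MetricSpace E] {F : X → E}
    (hF : Function.Injective F) :
    Ax0 (pullbackWeight F) ∧ AxSep (pullbackWeight F) ∧ AxSym (pullbackWeight F) ∧
      AxTri (pullbackWeight F) :=
  ⟨fun _ => edist_self _, fun _ _ h _ => hF (edist_eq_zero.1 h), fun _ _ => edist_comm _ _,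
    fun _ _ _ => edist_triangle _ _ _⟩

lemma isOpen_psi_pullbackWeight_iff {X E : Type*} [MetricSpace E] (F : X → E) (s : Set X) :
    IsOpen[psi (pullbackWeight F)] s ↔
      ∀ x ∈ s, ∃ δ > 0, ∀ y, dist (F x) (F y) < δ → y ∈ s := by
  let _ : PseudoMetricSpace X := PseudoMetricSpace.induced F inferInstance
  have h : psi (pullbackWeight F) = (inferInstance : TopologicalSpace X) := by
    refine le_antisymm (fun u hu => ?_) (le_generateFrom ?_)
    · have hu' := EMetric.isOpen_iff.1 hu
      refine (@isOpen_iff_forall_mem_open X (psi (pullbackWeight F)) u).2 fun x hx => ?_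
      obtain ⟨ε, hε, hb⟩ := hu' x hx
      refine ⟨{y | pullbackWeight F (x, y) < ε}, fun y hy => hb ?_,
        TopologicalSpace.isOpen_generateFrom_of_mem ⟨x, ε, hε, rfl⟩, ?_⟩
      · exact (edist_comm (F y) (F x)).trans_lt hy
      · exact (edist_self (F x)).trans_lt hε
    · rintro _ ⟨x, ε, -, rfl⟩
      have : {y | pullbackWeight F (x, y) < ε} = Metric.eball x ε := by
        ext y
        exact (congrArg (· < ε) (edist_comm (F x) (F y))).to_iff
      rw [this]
      exact Metric.isOpen_eball
  rw [h, Metric.isOpen_iff]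
  refine forall₂_congr fun x _ => exists_congr fun δ => and_congr_right fun _ =>
    forall_congr' fun y => ?_
  rw [Metric.mem_ball, dist_comm]
  rfl

lemma psi_le_psi_pathInf {X E : Type*} [MetricSpace E] (F : X → E) {q : X × X → ℝ≥0∞}
    (hq : q ≤ pullbackWeight F) : psi (pullbackWeight F) ≤ psi (pathInf q) := by
  refine le_generateFrom ?_
  rintro _ ⟨x, ε, -, rfl⟩
  rw [isOpen_psi_pullbackWeight_iff]
  intro y hy
  obtain ⟨δ, hδ, h⟩ := ENNReal.lt_iff_exists_add_pos_lt.1 hy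
  refine ⟨δ, NNReal.coe_pos.2 hδ, fun z hz => lt_of_le_of_lt ?_ h⟩
  refine (pathInf_le_add q x y z).trans (add_le_add le_rfl ((hq _).trans ?_))
  exact (edist_nndist (F y) (F z)).trans_le (by exact_mod_cast hz.le)

/-- Countably many chains of points in the plane accumulating at the origin. The `n`-th chain lies
at height `1 / (n + 1)`, and `h` determines the long steps along the chains. -/
noncomputable def chainEmbedding (h : ℕ → ℕ) : Option (ℕ × ℕ) → ℝ × ℝ
  | none => 0
  | some (n, j) => (h j * (1 / (n + 1)) + j * (1 / (n + 1)) ^ 2, 1 / (n + 1))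

lemma dist_chainEmbedding_none (h : ℕ → ℕ) (n j : ℕ) :
    dist (chainEmbedding h none) (chainEmbedding h (some (n, j))) =
      max (h j * (1 / (n + 1)) + j * (1 / (n + 1)) ^ 2 : ℝ) (1 / (n + 1)) := by
  rw [dist_comm]
  simp only [chainEmbedding, Prod.dist_eq, Prod.fst_zero, Prod.snd_zero, Real.dist_eq, sub_zero]
  rw [abs_of_nonneg (by positivity), abs_of_nonneg (by positivity)]

lemma chainEmbedding_isolated {h : ℕ → ℕ} (hh : Monotone h) (n j : ℕ) (y : Option (ℕ × ℕ))
    (hy : dist (chainEmbedding h (some (n, j))) (chainEmbedding h y) <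
      1 / (((n : ℝ) + 1) * (n + 2))) : y = some (n, j) := by
  have hn : (0 : ℝ) < n + 1 := by positivity
  have hlt : 1 / (((n : ℝ) + 1) * (n + 2)) ≤ (1 / (n + 1)) ^ 2 := by
    rw [div_pow, one_pow]
    exact one_div_le_one_div_of_le (by positivity) (by nlinarith)
  have hlt' : 1 / (((n : ℝ) + 1) * (n + 2)) ≤ 1 / (n + 1) :=
    one_div_le_one_div_of_le hn (by nlinarith)
  rcases y with _ | ⟨k, i⟩
  · rw [dist_comm, dist_chainEmbedding_none] at hy
    exact absurd (lt_of_le_of_lt (le_max_right _ _) hy) hlt'.not_gt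
  simp only [chainEmbedding, Prod.dist_eq, Real.dist_eq, max_lt_iff] at hy
  obtain ⟨h1, h2⟩ := hy
  have hk : (0 : ℝ) < k + 1 := by positivity
  have hkn : k = n := by
    by_contra hne
    refine h2.not_ge ?_
    rcases lt_or_gt_of_ne hne with hl | hl
    · have hl' : (k : ℝ) + 1 ≤ n := by exact_mod_cast hl
      rw [abs_sub_comm]
      refine le_trans ?_ (le_abs_self _)
      rw [div_sub_div _ _ hk.ne' hn.ne', div_le_div_iff₀ (by positivity) (by positivity)]
      nlinarith [mul_pos hn hk, mul_nonneg hn.le (sub_nonneg.2 hl')]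
    · have hl' : (n : ℝ) + 1 ≤ k := by exact_mod_cast hl
      refine le_trans ?_ (le_abs_self _)
      rw [div_sub_div _ _ hn.ne' hk.ne', div_le_div_iff₀ (by positivity) (by positivity)]
      nlinarith [mul_pos hn hk, mul_nonneg (mul_nonneg hn.le hn.le) (sub_nonneg.2 hl')]
  subst hkn
  have hij : i = j := by
    by_contra hne
    refine h1.not_ge (hlt.trans ?_)
    have ht : (0 : ℝ) < 1 / (k + 1) := by positivity
    generalize (1 : ℝ) / (k + 1) = t at ht
    rcases lt_or_gt_of_ne hne with hl | hl
    · have hl' : (i : ℝ) + 1 ≤ j := by exact_mod_cast hl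
      have hm : (h i : ℝ) ≤ h j := by exact_mod_cast hh hl.le
      refine le_trans ?_ (le_abs_self _)
      nlinarith [mul_nonneg ht.le (sub_nonneg.2 hm), mul_nonneg (sq_nonneg t) (sub_nonneg.2 hl')]
    · have hl' : (j : ℝ) + 1 ≤ i := by exact_mod_cast hl
      have hm : (h j : ℝ) ≤ h i := by exact_mod_cast hh hl.le
      rw [abs_sub_comm]
      refine le_trans ?_ (le_abs_self _)
      nlinarith [mul_nonneg ht.le (sub_nonneg.2 hm), mul_nonneg (sq_nonneg t) (sub_nonneg.2 hl')]
  rw [hij]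

lemma chainEmbedding_injective {h : ℕ → ℕ} (hh : Monotone h) :
    Function.Injective (chainEmbedding h) := by
  intro x y hxy
  rcases x with _ | ⟨n, j⟩
  · rcases y with _ | ⟨n, j⟩
    · rfl
    · exact chainEmbedding_isolated hh n j none (by rw [hxy, dist_self]; positivity)
  · exact (chainEmbedding_isolated hh n j y (by rw [hxy, dist_self]; positivity)).symm

lemma isOpen_psi_chainEmbedding_iff {h : ℕ → ℕ} (hh : Monotone h) (s : Set (Option (ℕ × ℕ))) :
    IsOpen[psi (pullbackWeight (chainEmbedding h))] s ↔ (none ∈ s → ∃ δ : ℝ, 0 < δ ∧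
      ∀ n j : ℕ, (h j * (1 / (n + 1)) + j * (1 / (n + 1)) ^ 2 : ℝ) < δ → (1 / (n + 1) : ℝ) < δ →
        some (n, j) ∈ s) := by
  rw [isOpen_psi_pullbackWeight_iff]
  constructor
  · intro H hs
    obtain ⟨δ, hδ, h'⟩ := H none hs
    refine ⟨δ, hδ, fun n j h1 h2 => h' _ ?_⟩
    rw [dist_chainEmbedding_none]
    exact max_lt h1 h2
  · rintro H (_ | ⟨n, j⟩) hx
    · obtain ⟨δ, hδ, h'⟩ := H hx
      refine ⟨δ, hδ, ?_⟩
      rintro (_ | ⟨n, j⟩) hy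
      · exact hx
      · rw [dist_chainEmbedding_none, max_lt_iff] at hy
        exact h' n j hy.1 hy.2
    · refine ⟨1 / (((n : ℝ) + 1) * (n + 2)), by positivity, fun y hy => ?_⟩
      rw [chainEmbedding_isolated hh n j y hy]
      exact hx

/-- Raising `h` by at most one does not refine the topology. -/
lemma psi_chainEmbedding_le {h k : ℕ → ℕ} (hh : Monotone h) (hk : Monotone k)
    (hkh : ∀ j, k j ≤ h j + 1) :
    psi (pullbackWeight (chainEmbedding h)) ≤ psi (pullbackWeight (chainEmbedding k)) := by
  intro s hs
  have hs' := (isOpen_psi_chainEmbedding_iff hk s).1 hs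
  refine (isOpen_psi_chainEmbedding_iff hh s).2 fun hn => ?_
  obtain ⟨δ, hδ, H⟩ := hs' hn
  refine ⟨δ / 2, half_pos hδ, fun n j h1 h2 => H n j ?_ (by linarith)⟩
  have hkh' : (k j : ℝ) ≤ h j + 1 := by exact_mod_cast hkh j
  have ht : (0 : ℝ) < 1 / (n + 1) := by positivity
  nlinarith [mul_le_mul_of_nonneg_right hkh' ht.le]

lemma monotone_half : Monotone fun j : ℕ => j / 2 := fun _ _ h => Nat.div_le_div_right h

lemma monotone_half_succ : Monotone fun j : ℕ => (j + 1) / 2 :=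
  fun _ _ h => Nat.div_le_div_right (Nat.succ_le_succ h)

/-- A step along which `h` is constant is short. -/
lemma pullbackWeight_chainEmbedding_succ {h : ℕ → ℕ} (n j : ℕ) (hj : h (j + 1) = h j) :
    pullbackWeight (chainEmbedding h) (some (n, j), some (n, j + 1)) =
      ENNReal.ofReal ((1 / (n + 1)) ^ 2) := by
  rw [pullbackWeight, edist_dist, dist_comm]
  congr 1
  simp only [chainEmbedding, Prod.dist_eq, dist_self, Real.dist_eq, hj]
  rw [max_eq_left (abs_nonneg _)]
  push_cast
  rw [show ∀ a b c : ℝ, a + (b + 1) * c - (a + b * c) = c by intros; ring,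
    abs_of_nonneg (by positivity)]

/-- The chain points are reached by many short steps, each short for one of the two metrics. -/
lemma pathInf_chain_le (x : Option (ℕ × ℕ)) (n j : ℕ) :
    pathInf (pullbackWeight (chainEmbedding fun j => j / 2) ⊓
        pullbackWeight (chainEmbedding fun j => (j + 1) / 2)) (x, some (n, j)) ≤
      pathInf (pullbackWeight (chainEmbedding fun j => j / 2) ⊓
        pullbackWeight (chainEmbedding fun j => (j + 1) / 2)) (x, none) +
        ENNReal.ofReal (1 / (n + 1) + j * (1 / (n + 1)) ^ 2) := by
  induction j with
  | zero =>
    refine (pathInf_le_add _ x none _).trans (add_le_add le_rfl (inf_le_left.trans ?_))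
    rw [pullbackWeight, edist_dist, dist_chainEmbedding_none]
    refine ENNReal.ofReal_le_ofReal ?_
    simp
    positivity
  | succ j ih =>
    refine (pathInf_le_add _ x (some (n, j)) _).trans ((add_le_add ih ?_).trans_eq
      (add_assoc _ (ENNReal.ofReal _) (ENNReal.ofReal ((1 / (n + 1)) ^ 2))) |>.trans_eq ?_)
    · rcases Nat.even_or_odd' j with ⟨i, rfl | rfl⟩
      · exact inf_le_left.trans_eq (pullbackWeight_chainEmbedding_succ n _ (by omega))
      · exact inf_le_right.trans_eq (pullbackWeight_chainEmbedding_succ n _ (by omega))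
    · rw [← ENNReal.ofReal_add (by positivity) (by positivity)]
      congr 2
      push_cast
      ring

open Filter in
lemma tendsto_chain_psi_pathInf :
    Tendsto (fun n : ℕ => some (n, 2 * (n + 1))) atTop
      (@nhds _ (psi (pathInf (pullbackWeight (chainEmbedding fun j => j / 2) ⊓
        pullbackWeight (chainEmbedding fun j => (j + 1) / 2)))) none) := by
  rw [psi, TopologicalSpace.tendsto_nhds_generateFrom_iff]
  rintro _ ⟨x, ε, -, rfl⟩ hx
  have ht : Tendsto (fun n : ℕ => ENNReal.ofReal (3 * (1 / ((n : ℝ) + 1)))) atTop (𝓝 0) := by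
    simpa using ENNReal.tendsto_ofReal (tendsto_one_div_add_atTop_nhds_zero_nat.const_mul (3 : ℝ))
  filter_upwards [ht.eventually_lt_const (tsub_pos_of_lt hx)] with n hn
  refine (pathInf_chain_le x n (2 * (n + 1))).trans_lt ?_
  have he : (1 / (n + 1) + (2 * (n + 1) : ℕ) * (1 / (n + 1)) ^ 2 : ℝ) = 3 * (1 / (n + 1)) := by
    push_cast
    field_simp
    ring
  rw [he, add_comm]
  exact lt_tsub_iff_right.1 hn

/-- There are a set `X` and extended metrics `d, m` on it with
`ψ(d) = ψ(m)`, such that for `p = pathInf (d ⊓ m)` (the greatest weight structure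
satisfying (0) and (Δ) below both `d` and `m`), the topology `ψ(p)` is *strictly
coarser* than `ψ(d)`.  NB: Mathlib orders topologies with discrete = `⊥` (reverse to
inclusion of open sets), so "`ψ(p)` strictly coarser than `ψ(d)`" reads `ψ(d) < ψ(p)`. -/
theorem stmt9 :
    ∃ (X : Type) (d m : X × X → ℝ≥0∞),
      (Ax0 d ∧ AxSep d ∧ AxSym d ∧ AxTri d) ∧
      (Ax0 m ∧ AxSep m ∧ AxSym m ∧ AxTri m) ∧
      psi d = psi m ∧
      psi d < psi (pathInf (d ⊓ m)) := by
  refine ⟨Option (ℕ × ℕ), pullbackWeight (chainEmbedding fun j => j / 2),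
    pullbackWeight (chainEmbedding fun j => (j + 1) / 2),
    pullbackWeight_axioms (chainEmbedding_injective monotone_half),
    pullbackWeight_axioms (chainEmbedding_injective monotone_half_succ),
    le_antisymm
      (psi_chainEmbedding_le monotone_half monotone_half_succ fun j => by omega)
      (psi_chainEmbedding_le monotone_half_succ monotone_half fun j => by omega),
    lt_of_le_not_ge (psi_le_psi_pathInf _ inf_le_left) fun hle => ?_⟩
  have ho : IsOpen[psi (pullbackWeight (chainEmbedding fun j => j / 2))]
      {y | ∀ n : ℕ, y ≠ some (n, 2 * (n + 1))} := by
    refine (isOpen_psi_chainEmbedding_iff monotone_half _).2 fun _ => ⟨1, one_pos, ?_⟩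
    intro n j h1 _ k hk
    obtain ⟨rfl, rfl⟩ := Prod.mk.inj (Option.some.inj hk)
    refine h1.not_ge ?_
    rw [Nat.mul_div_cancel_left _ two_pos]
    push_cast
    rw [mul_one_div_cancel (by positivity)]
    exact le_add_of_nonneg_right (by positivity)
  have hmem := @IsOpen.mem_nhds _ (psi _) none _ (hle _ ho) fun n => (Option.some_ne_none _).symm
  obtain ⟨n, hn⟩ := (tendsto_chain_psi_pathInf.eventually hmem).exists
  exact hn n rfl
end

section
/- There exist a countable set X and weight structures d, m : X × X → [0,∞], both satisfying axioms (0), (s) and (Σ), such that ψ(d) = ψ(m) but ψ(d ⊓ m) ≠ ψ(d), where d ⊓ m is the pointwise infimum, (d ⊓ m)(x,y) = min(d(x,y), m(x,y)). Consequently, for weight structures not satisfying the triangle inequality, the fibers of ψ are in general not closed under binary pointwise meets. -/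
open scoped ENNReal

open scoped Topology

/-- Weights on `ℕ` along which `n ≥ 1` tends to `0`: `0` has weight `0` and `n` has weight `1/n`. -/
noncomputable def seqWeight (n : ℕ) : ℝ≥0∞ := if n = 0 then 0 else (n : ℝ≥0∞)⁻¹

/-- The convergent-sequence ultrametric with limit `0`, modified so that `1` has distance `2`
from every `n ≥ 2`. -/
noncomputable def bentDist (p : ℕ × ℕ) : ℝ≥0∞ :=
  if p.1 = p.2 then 0
  else if (p.1 = 1 ∧ 2 ≤ p.2) ∨ (p.2 = 1 ∧ 2 ≤ p.1) then 2
  else max (seqWeight p.1) (seqWeight p.2)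

/-- The discrete `0`-`1` metric on `ℕ`. -/
noncomputable def unitDist (p : ℕ × ℕ) : ℝ≥0∞ := if p.1 = p.2 then 0 else 1

lemma seqWeight_pos {n : ℕ} (hn : n ≠ 0) : 0 < seqWeight n := by
  simp [seqWeight, hn]

lemma seqWeight_one : seqWeight 1 = 1 := by simp [seqWeight]

lemma seqWeight_le_one (n : ℕ) : seqWeight n ≤ 1 := by
  unfold seqWeight
  split_ifs with h
  · exact zero_le
  · exact ENNReal.inv_le_one.2 (by exact_mod_cast Nat.one_le_iff_ne_zero.2 h)

lemma seqWeight_lt_one {n : ℕ} (hn : n ≠ 1) : seqWeight n < 1 := by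
  unfold seqWeight
  split_ifs with h
  · exact one_pos
  · exact ENNReal.inv_lt_one.2 (by exact_mod_cast (by omega : 1 < n))

lemma eventually_seqWeight_lt {ε : ℝ≥0∞} (hε : 0 < ε) :
    ∀ᶠ n in Filter.cofinite, seqWeight n < ε := by
  rw [Nat.cofinite_eq_atTop]
  filter_upwards [ENNReal.tendsto_inv_nat_nhds_zero.eventually_lt_const hε,
    Filter.eventually_ne_atTop 0] with n hn h0
  simpa [seqWeight, h0] using hn

lemma isOpen_psi_ball {X : Type*} (d : X × X → ℝ≥0∞) (x : X) {ε : ℝ≥0∞} (hε : 0 < ε) :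
    IsOpen[psi d] {y | d (x, y) < ε} :=
  TopologicalSpace.isOpen_generateFrom_of_mem ⟨x, ε, hε, rfl⟩

lemma isOpen_psi_singleton {X : Type*} {d : X × X → ℝ≥0∞} (h0 : Ax0 d) {x : X} {ε : ℝ≥0∞}
    (hε : 0 < ε) (h : ∀ y, y ≠ x → ε ≤ d (x, y)) : IsOpen[psi d] {x} := by
  convert isOpen_psi_ball d x hε using 1
  ext y
  by_cases hy : y = x
  · simp [hy, h0 x, hε]
  · simp [hy, h y hy]

lemma ax0_bentDist : Ax0 bentDist := fun x => by simp [bentDist]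

lemma axSym_bentDist : AxSym bentDist := fun x y => by
  simp only [bentDist, eq_comm (a := x) (b := y), max_comm (seqWeight x),
    or_comm (a := x = 1 ∧ 2 ≤ y)]

lemma seqWeight_le_bentDist {x y : ℕ} (h : y ≠ x) : seqWeight x ≤ bentDist (x, y) := by
  simp only [bentDist, h.symm, if_false]
  split_ifs
  · exact (seqWeight_le_one x).trans one_le_two
  · exact le_max_left _ _

lemma axSep_bentDist : AxSep bentDist := fun x y hxy hyx => by
  by_contra h
  rcases eq_or_ne x 0 with rfl | hx
  · exact ((seqWeight_pos (Ne.symm h)).trans_le (seqWeight_le_bentDist h)).ne' hyx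
  · exact ((seqWeight_pos hx).trans_le (seqWeight_le_bentDist (Ne.symm h))).ne' hxy

lemma bentDist_zero_left (y : ℕ) : bentDist (0, y) = seqWeight y := by
  by_cases h : 0 = y
  · simp [bentDist, ← h, seqWeight]
  · simp [bentDist, h, seqWeight]

lemma bentDist_zero_right (x : ℕ) : bentDist (x, 0) = seqWeight x := by
  rw [axSym_bentDist, bentDist_zero_left]

lemma psi_bentDist : psi bentDist = ⊥ := by
  refine eq_bot_of_singletons_open fun x => ?_
  rcases eq_or_ne x 0 with rfl | hx
  · suffices hball : ({0} : Set ℕ) = {y | bentDist (1, y) < 2} ∩ {y | bentDist (0, y) < 1} by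
      rw [hball]
      exact (psi bentDist).isOpen_inter _ _ (isOpen_psi_ball bentDist 1 two_pos)
        (isOpen_psi_ball bentDist 0 one_pos)
    ext y
    simp only [Set.mem_singleton_iff, Set.mem_inter_iff, Set.mem_ofPred_eq, bentDist_zero_left]
    constructor
    · rintro rfl
      exact ⟨by rw [bentDist_zero_right, seqWeight_one]; exact ENNReal.one_lt_two,
        seqWeight_lt_one zero_ne_one⟩
    · rintro ⟨h1, h2⟩
      by_contra hy
      have hy1 : y ≠ 1 := by
        rintro rfl
        exact h2.ne seqWeight_one
      have hy2 : 2 ≤ y := by omega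
      simp [bentDist, hy1.symm, hy2] at h1
  · exact isOpen_psi_singleton ax0_bentDist (seqWeight_pos hx) fun y => seqWeight_le_bentDist

lemma ax0_unitDist : Ax0 unitDist := fun x => by simp [unitDist]

lemma axSym_unitDist : AxSym unitDist := fun x y => by
  simp only [unitDist, eq_comm (a := x) (b := y)]

lemma axSep_unitDist : AxSep unitDist := fun x y h _ => by
  simpa [unitDist] using h

lemma psi_unitDist : psi unitDist = ⊥ :=
  eq_bot_of_singletons_open fun x => isOpen_psi_singleton ax0_unitDist one_pos fun y hy => by
    simp [unitDist, hy.symm]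

lemma inf_dist_le_max (x y : ℕ) :
    (bentDist ⊓ unitDist) (x, y) ≤ max (seqWeight x) (seqWeight y) := by
  rw [Pi.inf_apply]
  by_cases h : (x = 1 ∧ 2 ≤ y) ∨ (y = 1 ∧ 2 ≤ x)
  · have hu : unitDist (x, y) ≤ 1 := by
      unfold unitDist
      split_ifs <;> simp
    refine inf_le_right.trans (hu.trans ?_)
    rcases h with ⟨rfl, -⟩ | ⟨rfl, -⟩ <;> simp [seqWeight_one]
  · refine inf_le_left.trans ?_
    simp only [bentDist, h, if_false]
    split_ifs <;> simp

lemma seqWeight_le_inf_dist (x : ℕ) : seqWeight x ≤ (bentDist ⊓ unitDist) (x, 0) := by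
  rw [Pi.inf_apply, bentDist_zero_right]
  refine le_inf le_rfl ?_
  by_cases hx : x = 0
  · simp [hx, seqWeight]
  · simpa [unitDist, hx] using seqWeight_le_one x

lemma cofinite_le_nhds_zero :
    Filter.cofinite ≤ @nhds ℕ (psi (bentDist ⊓ unitDist)) 0 := by
  rw [psi, TopologicalSpace.nhds_generateFrom]
  refine le_iInf₂ ?_
  rintro _ ⟨h0, x, ε, hε, rfl⟩
  rw [Filter.le_principal_iff]
  filter_upwards [eventually_seqWeight_lt hε] with y hy
  exact (inf_dist_le_max x y).trans_lt (max_lt ((seqWeight_le_inf_dist x).trans_lt h0) hy)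

lemma psi_inf_ne_bot : psi (bentDist ⊓ unitDist) ≠ ⊥ := by
  intro h
  have hle := cofinite_le_nhds_zero
  rw [h, @nhds_discrete ℕ ⊥ ⟨rfl⟩, Filter.le_pure_iff, Filter.mem_cofinite] at hle
  exact (Set.finite_singleton 0).infinite_compl hle

/-- There are a countable set `X` and weight structures `d, m`
satisfying (0), (s), (Σ) with `ψ(d) = ψ(m)` but `ψ(d ⊓ m) ≠ ψ(d)` (pointwise infimum);
hence the fibers of `ψ` need not be closed under binary pointwise meets. -/
theorem stmt11 :
    ∃ (X : Type) (_ : Countable X) (d m : X × X → ℝ≥0∞),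
      (Ax0 d ∧ AxSep d ∧ AxSym d) ∧ (Ax0 m ∧ AxSep m ∧ AxSym m) ∧
      psi d = psi m ∧ psi (d ⊓ m) ≠ psi d := by
  exact ⟨ℕ, inferInstance, bentDist, unitDist, ⟨ax0_bentDist, axSep_bentDist, axSym_bentDist⟩,
    ⟨ax0_unitDist, axSep_unitDist, axSym_unitDist⟩, psi_bentDist.trans psi_unitDist.symm,
    psi_bentDist ▸ psi_inf_ne_bot⟩
end

section
/- Let X be a set and let d, m : X × X → [0,∞] be weight structures. Then φ(d ⊓ m) = φ(d) ⊓ φ(m), where d ⊓ m denotes the pointwise infimum (d ⊓ m)(x,y) = min(d(x,y), m(x,y)), and φ(d) ⊓ φ(m) is the meet of the two topologies in the lattice of topologies ordered by inclusion of open sets; equivalently, a set O ⊆ X is φ(d ⊓ m)-open if and only if it is both φ(d)-open and φ(m)-open. Consequently φ preserves binary meets. -/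
open scoped ENNReal

/-- `O` is `φ(d)`-open: every point of `O` has some ball around it inside `O`. -/
def phiOpen {X : Type*} (d : X × X → ℝ≥0∞) (O : Set X) : Prop :=
  ∀ x ∈ O, ∃ ε : ℝ≥0∞, 0 < ε ∧ {y : X | d (x, y) < ε} ⊆ O

/-- A set open for `d` is open for every larger weight structure. -/
theorem phiOpen.mono {X : Type*} {d e : X × X → ℝ≥0∞} (hde : d ≤ e) {O : Set X}
    (hO : phiOpen d O) : phiOpen e O := by
  intro x hx
  obtain ⟨ε, hε, hball⟩ := hO x hx
  exact ⟨ε, hε, fun y hy => hball ((hde (x, y)).trans_lt hy)⟩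

/-- `φ(d ⊓ m) = φ(d) ⊓ φ(m)`: a set is `φ(d ⊓ m)`-open (for the pointwise
infimum `d ⊓ m`) if and only if it is both `φ(d)`-open and `φ(m)`-open.  Hence `φ`
preserves binary meets. -/
theorem stmt13 (X : Type*) (d m : X × X → ℝ≥0∞) :
    ∀ O : Set X, phiOpen (d ⊓ m) O ↔ phiOpen d O ∧ phiOpen m O := by
  intro O
  refine ⟨fun h => ⟨h.mono inf_le_left, h.mono inf_le_right⟩, ?_⟩
  rintro ⟨hd, hm⟩ x hx
  obtain ⟨ε, hε, hdO⟩ := hd x hx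
  obtain ⟨δ, hδ, hmO⟩ := hm x hx
  refine ⟨min ε δ, lt_min hε hδ, fun y hy => ?_⟩
  rcases inf_lt_iff.mp (show d (x, y) ⊓ m (x, y) < min ε δ from hy) with h | h
  · exact hdO (h.trans_le (min_le_left ε δ))
  · exact hmO (h.trans_le (min_le_right ε δ))
end

section
/- There exist a countable set X and weight structures d, m : X × X → [0,∞], both satisfying axioms (0) and (Σ), such that φ(d) = φ(m) but φ(d ⊔ m) ≠ φ(d), where d ⊔ m is the pointwise supremum (d ⊔ m)(x,y) = max(d(x,y), m(x,y)). Consequently, the fibers of φ are in general not closed under binary joins, and φ does not preserve binary joins. -/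
open scoped ENNReal

open Classical in
/-- The weight structure of a graph: `0` between equal or adjacent vertices, `1` otherwise. -/
noncomputable def graphWeight {X : Type*} (G : SimpleGraph X) (p : X × X) : ℝ≥0∞ :=
  if p.1 = p.2 ∨ G.Adj p.1 p.2 then 0 else 1

theorem ax0_graphWeight {X : Type*} (G : SimpleGraph X) : Ax0 (graphWeight G) := by
  intro x
  simp [graphWeight]

theorem axSym_graphWeight {X : Type*} (G : SimpleGraph X) : AxSym (graphWeight G) := by
  intro x y
  unfold graphWeight
  congr 1
  exact propext (or_congr eq_comm (G.adj_comm x y))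

theorem graphWeight_lt_one_iff {X : Type*} (G : SimpleGraph X) (x y : X) :
    graphWeight G (x, y) < 1 ↔ x = y ∨ G.Adj x y := by
  unfold graphWeight
  split_ifs with h <;> simpa using h

/-- For a connected graph, `φ` of the graph weight is the indiscrete topology. -/
theorem phiOpen_graphWeight_iff {X : Type*} {G : SimpleGraph X} (hG : G.Preconnected)
    (O : Set X) : phiOpen (graphWeight G) O ↔ ∀ x ∈ O, ∀ y, y ∈ O := by
  constructor
  · intro hO x hx y
    obtain ⟨w⟩ := hG x y
    induction w with
    | nil => exact hx
    | @cons u v _ huv _ ih =>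
      obtain ⟨ε, hε, hsub⟩ := hO u hx
      refine ih (hsub ?_)
      simpa [graphWeight, huv] using hε
  · intro hO x hx
    exact ⟨1, one_pos, fun y _ => hO x hx y⟩

/-- Adjacency in a graph and in its complement exclude each other, so the join of their weights
induces the discrete topology. -/
theorem phiOpen_graphWeight_sup_compl {X : Type*} (G : SimpleGraph X) (O : Set X) :
    phiOpen (graphWeight G ⊔ graphWeight Gᶜ) O := by
  intro x hx
  refine ⟨1, one_pos, fun y hy => ?_⟩
  simp only [Set.mem_ofPred_eq, Pi.sup_apply, sup_lt_iff, graphWeight_lt_one_iff,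
    SimpleGraph.compl_adj] at hy
  obtain rfl : x = y := by tauto
  exact hx

/-- The complement of the path `0 - 1 - 2 - 3` is the path `2 - 0 - 3 - 1`. -/
theorem preconnected_compl_pathGraph_four : (SimpleGraph.pathGraph 4)ᶜ.Preconnected := by
  have adj (a b : Fin 4) (h : a ≠ b ∧ ¬(a.val + 1 = b.val ∨ b.val + 1 = a.val)) :
      (SimpleGraph.pathGraph 4)ᶜ.Reachable a b := by
    refine SimpleGraph.Adj.reachable ?_
    rwa [SimpleGraph.compl_adj, SimpleGraph.pathGraph_adj]
  have from_zero (a : Fin 4) : (SimpleGraph.pathGraph 4)ᶜ.Reachable 0 a := by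
    fin_cases a
    · exact .refl _
    · exact (adj 0 3 (by decide)).trans (adj 3 1 (by decide))
    · exact adj 0 2 (by decide)
    · exact adj 0 3 (by decide)
  exact fun a b => (from_zero a).symm.trans (from_zero b)

/-- There are a countable set `X` and weight structures `d, m` satisfying
(0) and (Σ) with `φ(d) = φ(m)` but `φ(d ⊔ m) ≠ φ(d)` (pointwise supremum); hence the
fibers of `φ` need not be closed under binary joins and `φ` does not preserve binary
joins. -/
theorem stmt14 :
    ∃ (X : Type) (_ : Countable X) (d m : X × X → ℝ≥0∞),
      (Ax0 d ∧ AxSym d) ∧ (Ax0 m ∧ AxSym m) ∧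
      {O : Set X | phiOpen d O} = {O : Set X | phiOpen m O} ∧
      {O : Set X | phiOpen (d ⊔ m) O} ≠ {O : Set X | phiOpen d O} := by
  have hpath := SimpleGraph.pathGraph_preconnected 4
  refine ⟨Fin 4, inferInstance, graphWeight (SimpleGraph.pathGraph 4),
    graphWeight (SimpleGraph.pathGraph 4)ᶜ, ⟨ax0_graphWeight _, axSym_graphWeight _⟩,
    ⟨ax0_graphWeight _, axSym_graphWeight _⟩, ?_, fun h => ?_⟩
  · ext O
    exact (phiOpen_graphWeight_iff hpath O).trans
      (phiOpen_graphWeight_iff preconnected_compl_pathGraph_four O).symm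
  · have hO : phiOpen (graphWeight (SimpleGraph.pathGraph 4)) {0} :=
      h.subset (phiOpen_graphWeight_sup_compl _ {0})
    exact absurd ((phiOpen_graphWeight_iff hpath _).1 hO 0 rfl 1) (by simp)
end

section
/- Let X be a set and let d, m : X × X → [0,∞] both satisfy axioms (0), (Σ) and (Δ), with d ≤ m pointwise. Suppose that d(x,y) > 0 for all x ≠ y, and that there is a finite subset S ⊆ X such that d(u,v) = m(u,v) whenever it is not the case that both u ∈ S and v ∈ S. Then d and m induce the same topology on X, i.e., ψ(d) = ψ(m). -/
open scoped ENNReal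

open scoped Topology in
/-- Every `psi d`-open set contains a ball around each of its points. -/
theorem exists_ball_subset_of_isOpen_psi {X : Type*} {d : X × X → ℝ≥0∞} (hT : AxTri d)
    {s : Set X} (hs : IsOpen[psi d] s) {x : X} (hx : x ∈ s) :
    ∃ ε : ℝ≥0∞, 0 < ε ∧ {y : X | d (x, y) < ε} ⊆ s := by
  change TopologicalSpace.GenerateOpen _ s at hs
  induction hs with
  | basic s h =>
    obtain ⟨c, ε, -, rfl⟩ := h
    refine ⟨ε - d (c, x), tsub_pos_of_lt hx, fun y hy => ?_⟩
    exact (hT c x y).trans_lt (lt_tsub_iff_left.mp hy)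
  | univ => exact ⟨1, one_pos, Set.subset_univ _⟩
  | inter s t _ _ ihs iht =>
    obtain ⟨ε, hε, hsε⟩ := ihs hx.1
    obtain ⟨δ, hδ, htδ⟩ := iht hx.2
    exact ⟨min ε δ, lt_min hε hδ, fun y (hy : d (x, y) < min ε δ) =>
      ⟨hsε (hy.trans_le (min_le_left _ _)), htδ (hy.trans_le (min_le_right _ _))⟩⟩
  | sUnion K _ ih =>
    obtain ⟨t, htK, hxt⟩ := hx
    obtain ⟨ε, hε, h⟩ := ih t htK hxt
    exact ⟨ε, hε, h.trans (Set.subset_sUnion_of_mem htK)⟩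

/-- If every `m`-ball contains a concentric `d`-ball, then `psi d` is finer than `psi m`. -/
theorem psi_le_psi_of_forall_ball_subset {X : Type*} {d m : X × X → ℝ≥0∞} (h0 : Ax0 d)
    (hT : AxTri m)
    (h : ∀ (x : X) (ε : ℝ≥0∞), 0 < ε →
      ∃ δ : ℝ≥0∞, 0 < δ ∧ {y : X | d (x, y) < δ} ⊆ {y : X | m (x, y) < ε}) :
    psi d ≤ psi m := by
  intro s hs
  let _ : TopologicalSpace X := psi d
  change IsOpen s
  refine isOpen_iff_forall_mem_open.mpr fun x hx => ?_
  obtain ⟨ε, hε, hsε⟩ := exists_ball_subset_of_isOpen_psi hT hs hx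
  obtain ⟨δ, hδ, hδε⟩ := h x ε hε
  refine ⟨{y | d (x, y) < δ}, hδε.trans hsε,
    TopologicalSpace.isOpen_generateFrom_of_mem ⟨x, δ, hδ, rfl⟩, ?_⟩
  simpa [h0 x] using hδ

/-- A weight structure which is positive off the diagonal is bounded below on a finite set. -/
theorem exists_pos_le_of_finite {X : Type*} {d : X × X → ℝ≥0∞}
    (hpos : ∀ x y : X, x ≠ y → 0 < d (x, y)) {S : Set X} (hS : S.Finite) (x : X) :
    ∃ δ : ℝ≥0∞, 0 < δ ∧ ∀ y ∈ S, x ≠ y → δ ≤ d (x, y) := by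
  classical
  refine ⟨(hS.toFinset.filter (x ≠ ·)).inf fun y => d (x, y), ?_, fun y hy hxy => ?_⟩
  · rw [Finset.lt_inf_iff ENNReal.zero_lt_top]
    exact fun y hy => hpos x y (Finset.mem_filter.mp hy).2
  · exact Finset.inf_le (Finset.mem_filter.mpr ⟨hS.mem_toFinset.mpr hy, hxy⟩)

/-- If `d ≤ m` both satisfy (0), (Σ), (Δ), `d` is positive off the
diagonal, and `d` and `m` agree except possibly on pairs from a finite set `S`, then
`ψ(d) = ψ(m)`. -/
theorem stmt16 (X : Type*) (d m : X × X → ℝ≥0∞)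
    (h0d : Ax0 d) (hSd : AxSym d) (hTd : AxTri d)
    (h0m : Ax0 m) (hSm : AxSym m) (hTm : AxTri m)
    (hdm : d ≤ m)
    (hpos : ∀ x y : X, x ≠ y → 0 < d (x, y))
    (S : Set X) (hS : S.Finite)
    (heq : ∀ u v : X, ¬(u ∈ S ∧ v ∈ S) → d (u, v) = m (u, v)) :
    psi d = psi m := by
  apply le_antisymm
  · refine psi_le_psi_of_forall_ball_subset h0d hTm fun x ε hε => ?_
    obtain ⟨δ, hδ, hle⟩ := exists_pos_le_of_finite hpos hS x
    refine ⟨min ε δ, lt_min hε hδ, fun y (hy : d (x, y) < min ε δ) => ?_⟩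
    change m (x, y) < ε
    by_cases hxy : x = y
    · rwa [← hxy, h0m x]
    · rw [← heq x y fun h =>
        ((hle y h.2 hxy).trans_lt (hy.trans_le (min_le_right _ _))).false]
      exact hy.trans_le (min_le_left _ _)
  · exact psi_le_psi_of_forall_ball_subset h0m hTd fun x ε hε =>
      ⟨ε, hε, fun y hy => (hdm (x, y)).trans_lt hy⟩
end

section
/- Let X be a set and let d : X × X → [0,∞] satisfy axioms (0), (Σ) and (Δ). Call d 1-elementarily maximal if there is no m : X × X → [0,∞] satisfying (0), (Σ) and (Δ) with d ≤ m pointwise and d ≠ m, for which there exist points x, y ∈ X such that m(u,v) = d(u,v) for all pairs (u,v) with {u,v} ≠ {x,y}. Then d is 1-elementarily maximal if and only if for all x ≠ y in X, d(x,y) = inf_{z ∈ X \ {x,y}} (d(x,z) + d(z,y)) (the infimum over the empty set being ∞); equivalently, for all x ≠ y, d(x,y) is not strictly smaller than that infimum (the reverse inequality being automatic from the triangle inequality). -/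
open scoped ENNReal

/-- `d` is 1-elementarily maximal: there is no weight structure `m` satisfying (0), (Σ),
(Δ) with `d ≤ m`, `d ≠ m`, agreeing with `d` except on a single unordered pair `{x,y}`. -/
def OneElemMax {X : Type*} (d : X × X → ℝ≥0∞) : Prop :=
  ¬ ∃ m : X × X → ℝ≥0∞, Ax0 m ∧ AxSym m ∧ AxTri m ∧ d ≤ m ∧ d ≠ m ∧
      ∃ x y : X, ∀ u v : X, ({u, v} : Set X) ≠ {x, y} → m (u, v) = d (u, v)

/-- `d` with its value on the unordered pair `{x, y}` replaced by `r`. -/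
noncomputable def updatePair {X : Type*} (d : X × X → ℝ≥0∞) (x y : X) (r : ℝ≥0∞) :
    X × X → ℝ≥0∞ :=
  open Classical in fun p => if ({p.1, p.2} : Set X) = {x, y} then r else d p

section UpdatePair

variable {X : Type*} {d : X × X → ℝ≥0∞} {x y : X} {r : ℝ≥0∞}

theorem updatePair_of_eq {u v : X} (h : ({u, v} : Set X) = {x, y}) :
    updatePair d x y r (u, v) = r :=
  if_pos h

theorem updatePair_of_ne {u v : X} (h : ({u, v} : Set X) ≠ {x, y}) :
    updatePair d x y r (u, v) = d (u, v) :=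
  if_neg h

theorem ax0_updatePair (h0 : Ax0 d) (hxy : x ≠ y) : Ax0 (updatePair d x y r) := by
  intro u
  rw [updatePair_of_ne, h0 u]
  rw [Ne, Set.pair_eq_pair_iff]
  rintro (⟨rfl, rfl⟩ | ⟨rfl, rfl⟩) <;> exact hxy rfl

theorem axSym_updatePair (hS : AxSym d) : AxSym (updatePair d x y r) := by
  intro u v
  by_cases h : ({u, v} : Set X) = {x, y}
  · rw [updatePair_of_eq h, updatePair_of_eq (Set.pair_comm u v ▸ h)]
  · rw [updatePair_of_ne h, updatePair_of_ne (Set.pair_comm u v ▸ h), hS]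

theorem le_updatePair (hS : AxSym d) (hr : d (x, y) ≤ r) : d ≤ updatePair d x y r := by
  rintro ⟨u, v⟩
  by_cases h : ({u, v} : Set X) = {x, y}
  · rw [updatePair_of_eq h]
    obtain ⟨rfl, rfl⟩ | ⟨rfl, rfl⟩ := Set.pair_eq_pair_iff.1 h
    · exact hr
    · rwa [hS]
  · rw [updatePair_of_ne h]

theorem axTri_updatePair (hS : AxSym d) (hT : AxTri d) (hr : d (x, y) ≤ r)
    (hr' : ∀ z, z ≠ x → z ≠ y → r ≤ d (x, z) + d (z, y)) :
    AxTri (updatePair d x y r) := by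
  intro u v w
  have hle := le_updatePair hS hr
  by_cases h : ({u, w} : Set X) = {x, y}
  · rw [updatePair_of_eq h]
    by_cases hu : v = u
    · subst hu
      rw [updatePair_of_eq h]
      exact le_add_self
    by_cases hw : v = w
    · subst hw
      rw [updatePair_of_eq h]
      exact le_self_add
    refine le_trans ?_ (add_le_add (hle (u, v)) (hle (v, w)))
    obtain ⟨rfl, rfl⟩ | ⟨rfl, rfl⟩ := Set.pair_eq_pair_iff.1 h
    · exact hr' v hu hw
    · rw [add_comm, hS v, hS u]
      exact hr' v hw hu
  · rw [updatePair_of_ne h]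
    exact (hT u v w).trans (add_le_add (hle _) (hle _))

end UpdatePair

/-- For `d` satisfying (0), (Σ), (Δ): `d` is 1-elementarily maximal iff
for all `x ≠ y`, `d(x,y) = ⨅_{z ∉ {x,y}} (d(x,z) + d(z,y))` (the infimum over the empty
set being `∞`). -/
theorem stmt17 (X : Type*) (d : X × X → ℝ≥0∞)
    (h0 : Ax0 d) (hS : AxSym d) (hT : AxTri d) :
    OneElemMax d ↔ ∀ x y : X, x ≠ y →
      d (x, y) = ⨅ z ∈ ({x, y}ᶜ : Set X), d (x, z) + d (z, y) := by
  constructor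
  · intro hmax x y hxy
    by_contra hne
    have hr : d (x, y) ≤ ⨅ z ∈ ({x, y}ᶜ : Set X), d (x, z) + d (z, y) :=
      le_iInf₂ fun z _ => hT x z y
    refine hmax ⟨updatePair d x y (⨅ z ∈ ({x, y}ᶜ : Set X), d (x, z) + d (z, y)),
      ax0_updatePair h0 hxy, axSym_updatePair hS, axTri_updatePair hS hT hr ?_,
      le_updatePair hS hr, ?_, x, y, fun u v => updatePair_of_ne⟩
    · intro z hzx hzy
      exact iInf₂_le z (by simp [hzx, hzy])
    · intro heq
      exact hne ((congrFun heq (x, y)).trans (updatePair_of_eq rfl))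
  · rintro h ⟨m, hm0, hmS, hmT, hle, hne, x, y, hm⟩
    have hxy_le : m (x, y) ≤ d (x, y) := by
      by_cases hxy : x = y
      · subst hxy
        rw [hm0, h0]
      rw [h x y hxy]
      refine le_iInf₂ fun z hz => ?_
      have hz' : z ≠ x ∧ z ≠ y := by simpa using hz
      have hxz : ({x, z} : Set X) ≠ {x, y} := by
        rw [Ne, Set.pair_eq_pair_iff]
        tauto
      have hzy : ({z, y} : Set X) ≠ {x, y} := by
        rw [Ne, Set.pair_eq_pair_iff]
        tauto
      rw [← hm x z hxz, ← hm z y hzy]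
      exact hmT x z y
    refine hne (le_antisymm hle ?_)
    rintro ⟨u, v⟩
    by_cases huv : ({u, v} : Set X) = {x, y}
    · obtain ⟨rfl, rfl⟩ | ⟨rfl, rfl⟩ := Set.pair_eq_pair_iff.1 huv
      · exact hxy_le
      · rwa [hmS, hS]
    · exact (hm u v huv).le
end

section
/- Let X be a set and let d : X × X → [0,∞] satisfy axioms (0), (s), (Σ) and (Δ) (an extended metric). Suppose d is Menger convex: for all x ≠ y and every r with 0 < r < d(x,y) there exists p ∈ X with d(x,p) = r and d(p,y) = d(x,y) − r. Then d is 1-elementarily maximal: there is no m : X × X → [0,∞] satisfying (0), (Σ) and (Δ) with d ≤ m pointwise and d ≠ m, for which there exist points x, y ∈ X such that m(u,v) = d(u,v) for all pairs (u,v) with {u,v} ≠ {x,y}. -/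
open scoped ENNReal

/-- Every Menger convex extended metric (axioms (0), (s), (Σ), (Δ)) is
1-elementarily maximal.  Subtraction in `[0,∞]` is truncated subtraction. -/
theorem stmt18 (X : Type*) (d : X × X → ℝ≥0∞)
    (h0 : Ax0 d) (hs : AxSep d) (hS : AxSym d) (hT : AxTri d)
    (hMenger : ∀ x y : X, x ≠ y → ∀ r : ℝ≥0∞, 0 < r → r < d (x, y) →
      ∃ p : X, d (x, p) = r ∧ d (p, y) = d (x, y) - r) :
    OneElemMax d := by
  rintro ⟨m, hm0, -, hmT, hle, hne, x, y, hxy⟩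
  obtain ⟨⟨u, v⟩, huv⟩ := Function.ne_iff.mp hne
  have hlt : d (u, v) < m (u, v) := lt_of_le_of_ne (hle _) huv
  have hpair : ({u, v} : Set X) = {x, y} := by
    by_contra h
    exact huv (hxy u v h).symm
  have huv_ne : u ≠ v := by
    rintro rfl
    exact huv ((h0 u).trans (hm0 u).symm)
  have hd_ne_zero : d (u, v) ≠ 0 := fun h => huv_ne (hs u v h ((hS v u).trans h))
  have hhalf : d (u, v) / 2 < d (u, v) := ENNReal.half_lt_self hd_ne_zero hlt.ne_top
  obtain ⟨p, hup, hpv⟩ := hMenger u v huv_ne _ (ENNReal.half_pos hd_ne_zero) hhalf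
  have hpu : p ≠ u := by
    rintro rfl
    exact (ENNReal.half_pos hd_ne_zero).ne ((h0 p).symm.trans hup)
  have hpv_ne : p ≠ v := by
    rintro rfl
    exact (tsub_pos_of_lt hhalf).ne ((h0 p).symm.trans hpv)
  have hmup : m (u, p) = d (u, p) := hxy u p fun h => by
    have hv : v ∈ ({u, p} : Set X) := by simp [h, ← hpair]
    rcases hv with hv | hv
    · exact huv_ne hv.symm
    · exact hpv_ne hv.symm
  have hmpv : m (p, v) = d (p, v) := hxy p v fun h => by
    have hu : u ∈ ({p, v} : Set X) := by simp [h, ← hpair]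
    rcases hu with hu | hu
    · exact hpu hu.symm
    · exact huv_ne hu
  have hmle := hmT u p v
  rw [hmup, hmpv, hup, hpv, add_tsub_cancel_of_le hhalf.le] at hmle
  exact hlt.not_ge hmle
end

section
/- Let X be a set and fix a real number α with 1 < α < 2. Define a map Φ from the complete lattice of equivalence relations (setoids) on X, ordered by implication of relations, to weight structures on X by: Φ(∼)(a,b) = 0 if a = b; Φ(∼)(a,b) = α if a ≠ b and a ∼ b; and Φ(∼)(a,b) = 1 otherwise. Then: (i) each Φ(∼) satisfies axioms (0), (s), (Σ) and (Δ); (ii) for each ∼, the topology ψ(Φ(∼)) is the discrete topology on X; (iii) Φ is injective and order-preserving; and (iv) Φ carries infima to pointwise infima: for every nonempty family {∼_i} of equivalence relations, Φ(⨅_i ∼_i) equals the pointwise infimum ⨅_i Φ(∼_i). In particular, the lattice of equivalence relations on X embeds, preserving arbitrary nonempty meets, into the fiber of ψ over the discrete topology. -/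
open scoped ENNReal

-- `Φ(∼)(a,b) = 0` if `a = b`, `= α` if `a ≠ b` and `a ∼ b`, and `= 1` otherwise.
open Classical in
noncomputable def Phi {X : Type*} (α : ℝ) (r : Setoid X) : X × X → ℝ≥0∞ :=
  fun p => if p.1 = p.2 then 0 else if r.r p.1 p.2 then ENNReal.ofReal α else 1

section Phi

variable {X : Type*} {α : ℝ}

lemma Phi_self (r : Setoid X) (a : X) : Phi α r (a, a) = 0 := by
  simp [Phi]

lemma Phi_of_rel {r : Setoid X} {a b : X} (hab : a ≠ b) (h : r a b) :
    Phi α r (a, b) = ENNReal.ofReal α :=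
  (if_neg hab).trans (if_pos h)

lemma Phi_of_not_rel {r : Setoid X} {a b : X} (h : ¬ r a b) : Phi α r (a, b) = 1 :=
  (if_neg fun hab : a = b => h (hab ▸ r.refl a)).trans (if_neg h)

lemma one_le_Phi (h1 : 1 < α) (r : Setoid X) {a b : X} (hab : a ≠ b) :
    1 ≤ Phi α r (a, b) := by
  by_cases h : r a b
  · rw [Phi_of_rel hab h]
    exact ENNReal.one_le_ofReal.2 h1.le
  · rw [Phi_of_not_rel h]

lemma Phi_le_ofReal (h1 : 1 < α) (r : Setoid X) (a b : X) :
    Phi α r (a, b) ≤ ENNReal.ofReal α := by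
  by_cases hab : a = b
  · simp [hab, Phi_self]
  by_cases h : r a b
  · rw [Phi_of_rel hab h]
  · rw [Phi_of_not_rel h]
    exact ENNReal.one_le_ofReal.2 h1.le

lemma Phi_eq_zero_iff (h1 : 1 < α) (r : Setoid X) {a b : X} :
    Phi α r (a, b) = 0 ↔ a = b := by
  refine ⟨fun h => ?_, fun h => h ▸ Phi_self r a⟩
  by_contra hab
  simpa [h] using one_le_Phi h1 r hab

lemma axSym_Phi (r : Setoid X) : AxSym (Phi α r) := fun x y => by
  by_cases hxy : x = y
  · rw [hxy]
  by_cases h : r x y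
  · rw [Phi_of_rel hxy h, Phi_of_rel (Ne.symm hxy) (r.symm h)]
  · rw [Phi_of_not_rel h, Phi_of_not_rel fun h' => h (r.symm h')]

lemma axTri_Phi (h1 : 1 < α) (h2 : α < 2) (r : Setoid X) : AxTri (Phi α r) := fun x y z => by
  by_cases hxy : x = y
  · simp [hxy, Phi_self]
  by_cases hyz : y = z
  · simp [hyz, Phi_self]
  calc Phi α r (x, z) ≤ ENNReal.ofReal α := Phi_le_ofReal h1 r x z
    _ ≤ 1 + 1 := ENNReal.ofReal_le_of_le_toReal (by norm_num; exact h2.le)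
    _ ≤ Phi α r (x, y) + Phi α r (y, z) :=
      add_le_add (one_le_Phi h1 r hxy) (one_le_Phi h1 r hyz)

lemma psi_Phi (h1 : 1 < α) (r : Setoid X) : psi (Phi α r) = ⊥ := by
  refine TopologicalSpace.ext_iff.2 fun s => ⟨fun _ => trivial, fun _ => ?_⟩
  rw [← Set.biUnion_of_singleton s]
  refine @isOpen_biUnion _ _ (psi (Phi α r)) _ _ fun x _ =>
    TopologicalSpace.isOpen_generateFrom_of_mem ⟨x, 1, one_pos, ?_⟩
  ext y
  refine ⟨fun h => ?_, fun h => ?_⟩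
  · rw [Set.mem_singleton_iff.1 h]
    simp [Phi_self]
  · by_contra hyx
    exact (one_le_Phi h1 r (Ne.symm hyx)).not_gt h

lemma Phi_le_Phi_iff (h1 : 1 < α) {r s : Setoid X} : Phi α r ≤ Phi α s ↔ r ≤ s := by
  constructor
  · intro h a b hr
    by_contra hs
    have hab : a ≠ b := fun hab => hs (hab ▸ s.refl a)
    have hle := h (a, b)
    rw [Phi_of_rel hab hr, Phi_of_not_rel hs] at hle
    exact hle.not_gt (ENNReal.one_lt_ofReal.2 h1)
  · rintro h ⟨a, b⟩
    by_cases hab : a = b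
    · simp [hab, Phi_self]
    by_cases hr : r a b
    · rw [Phi_of_rel hab hr, Phi_of_rel hab (h hr)]
    · rw [Phi_of_not_rel hr]
      exact one_le_Phi h1 s hab

lemma Phi_iInf (h1 : 1 < α) {ι : Sort*} [Nonempty ι] (S : ι → Setoid X) :
    Phi α (⨅ i, S i) = ⨅ i, Phi α (S i) := by
  refine le_antisymm (le_iInf fun i => (Phi_le_Phi_iff h1).2 (iInf_le S i)) ?_
  rintro ⟨a, b⟩
  rw [iInf_apply]
  by_cases hab : a = b
  · simp [hab, Phi_self]
  by_cases h : ∀ i, S i a b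
  · rw [Phi_of_rel hab (show (⨅ i, S i) a b from Set.forall_mem_range.2 h)]
    exact (iInf_le _ (Classical.arbitrary ι)).trans (Phi_le_ofReal h1 _ a b)
  · push Not at h
    obtain ⟨i, hi⟩ := h
    calc ⨅ i, Phi α (S i) (a, b) ≤ Phi α (S i) (a, b) := iInf_le _ i
      _ = 1 := Phi_of_not_rel hi
      _ ≤ Phi α (⨅ i, S i) (a, b) := one_le_Phi h1 _ hab

end Phi

/-- For `1 < α < 2`, the map `Φ` from equivalence relations on `X` to
weight structures satisfies: (i) each `Φ(∼)` is an extended metric (axioms (0), (s),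
(Σ), (Δ)); (ii) each `ψ(Φ(∼))` is the discrete topology (Mathlib's `⊥`); (iii) `Φ` is
injective and order-preserving; (iv) `Φ` carries infima of nonempty families to
pointwise infima.  In particular the lattice of equivalence relations embeds, preserving
arbitrary nonempty meets, into the fiber of `ψ` over the discrete topology. -/
theorem stmt19 (X : Type*) (α : ℝ) (h1 : 1 < α) (h2 : α < 2) :
    (∀ r : Setoid X, Ax0 (Phi α r) ∧ AxSep (Phi α r) ∧ AxSym (Phi α r) ∧ AxTri (Phi α r)) ∧
    (∀ r : Setoid X, psi (Phi α r) = ⊥) ∧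
    Function.Injective (Phi (X := X) α) ∧
    Monotone (Phi (X := X) α) ∧
    (∀ (ι : Type) (_ : Nonempty ι) (S : ι → Setoid X),
      Phi α (⨅ i, S i) = ⨅ i, Phi α (S i)) := by
  refine ⟨fun r => ⟨Phi_self r, fun x y h _ => (Phi_eq_zero_iff h1 r).1 h, axSym_Phi r,
    axTri_Phi h1 h2 r⟩, psi_Phi h1, fun r s h => ?_, fun r s => (Phi_le_Phi_iff h1).2,
    fun ι _ S => Phi_iInf h1 S⟩
  exact le_antisymm ((Phi_le_Phi_iff h1).1 h.le) ((Phi_le_Phi_iff h1).1 h.ge)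
end
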